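/- Let K = diag(k₁,k₂,k₃) with k₁ > k₂ > k₃ ≥ 1 and s_K(Q) = vex(KQ − QᵀK). If Q ∈ SO(3) satisfies Q_{ii} ≥ 0 for all i and Q_{ij}Q_{ji} ≤ 0 for all i ≠ j, then s_K(Q)ᵀ s_K(Q) ≥ tr(K − KQ). -/

import Mathlib

open Matrix

def vex (S : Matrix (Fin 3) (Fin 3) ℝ) : Fin 3 → ℝ :=
  ![S 2 1, S 0 2, S 1 0]

theorem sub_mul_le_sq_mul_sub_sq {k q : ℝ} (hk : 1 ≤ k) (h0 : 0 ≤ q) (h1 : q ≤ 1) :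
    k - k * q ≤ k ^ 2 * (1 - q ^ 2) := by
  have h : 1 ≤ k * (1 + q) := by nlinarith
  nlinarith [mul_nonneg (mul_nonneg (by linarith : 0 ≤ k) (sub_nonneg.2 h1)) (sub_nonneg.2 h)]

theorem sq_add_sq_le_sub_sq {a b x y : ℝ} (ha : 0 ≤ a) (hb : 0 ≤ b) (hxy : x * y ≤ 0) :
    a ^ 2 * x ^ 2 + b ^ 2 * y ^ 2 ≤ (a * x - b * y) ^ 2 := by
  nlinarith [mul_nonneg (mul_nonneg ha hb) (neg_nonneg.2 hxy)]

theorem stmt13 (k₁ k₂ k₃ : ℝ) (h12 : k₁ > k₂) (h23 : k₂ > k₃) (h3 : k₃ ≥ 1)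
    (Q : Matrix (Fin 3) (Fin 3) ℝ) (hQ : Qᵀ * Q = 1) (hdQ : Q.det = 1)
    (hdiag : ∀ i, 0 ≤ Q i i) (hoff : ∀ i j, i ≠ j → Q i j * Q j i ≤ 0) :
    let K : Matrix (Fin 3) (Fin 3) ℝ := Matrix.diagonal ![k₁, k₂, k₃]
    vex (K * Q - Qᵀ * K) ⬝ᵥ vex (K * Q - Qᵀ * K) ≥ (K - K * Q).trace := by
  intro K
  have hrow (i : Fin 3) : Q i 0 ^ 2 + Q i 1 ^ 2 + Q i 2 ^ 2 = 1 := by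
    have h := congrArg (fun M : Matrix (Fin 3) (Fin 3) ℝ => M i i) (mul_eq_one_comm.1 hQ)
    simpa [Matrix.mul_apply, Fin.sum_univ_three, sq] using h
  have hle (i : Fin 3) : Q i i ≤ 1 := by
    have h : Q i i ^ 2 ≤ ∑ j, Q i j ^ 2 :=
      Finset.single_le_sum (f := fun j => Q i j ^ 2) (fun j _ => sq_nonneg _) (Finset.mem_univ i)
    rw [Fin.sum_univ_three, hrow i] at h
    nlinarith
  have d0 := sub_mul_le_sq_mul_sub_sq (k := k₁) (by linarith) (hdiag 0) (hle 0)
  have d1 := sub_mul_le_sq_mul_sub_sq (k := k₂) (by linarith) (hdiag 1) (hle 1)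
  have d2 := sub_mul_le_sq_mul_sub_sq h3 (hdiag 2) (hle 2)
  rw [← hrow 0] at d0
  rw [← hrow 1] at d1
  rw [← hrow 2] at d2
  have o21 := sq_add_sq_le_sub_sq (a := k₃) (b := k₂) (by linarith) (by linarith)
    (hoff 2 1 (by decide))
  have o02 := sq_add_sq_le_sub_sq (a := k₁) (b := k₃) (by linarith) (by linarith)
    (hoff 0 2 (by decide))
  have o10 := sq_add_sq_le_sub_sq (a := k₂) (b := k₁) (by linarith) (by linarith)
    (hoff 1 0 (by decide))
  simp only [K, vex, Matrix.trace_fin_three, Matrix.sub_apply, Matrix.diagonal_mul,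
    Matrix.mul_diagonal, Matrix.transpose_apply, Matrix.diagonal_apply_eq, dotProduct,
    Fin.sum_univ_three, Matrix.cons_val]
  linarith
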